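/- Let d ≥ 1, R > 0, b > 0, q > 0, let γ ∈ ℝᵈ, let σ = (σ_{ij}) be a symmetric positive semidefinite d×d real matrix, and let ν be a finite Borel measure on ℝᵈ with ν({0}) = 0 and ∫_{ℝᵈ} |z| dν(z) < ∞. Let W : ℝᵈ → ℝ be continuous with support contained in the closed ball B̄_{R+b/2}(0), twice continuously differentiable on the open ball B_R(0), and suppose that for every x ∈ B_R(0): q·W(x) − (1/2)·∑_{i,j} σ_{ij} ∂²_{ij}W(x) − ⟨∇W(x), γ⟩ − ∫_{ℝᵈ} ( W(x+z) − W(x) − ⟨∇W(x), z⟩ ) dν(z) ≤ 0. If in addition W(x) ≤ 0 for every x with R ≤ |x| < R + b/2, then W(x) ≤ 0 for every x ∈ ℝᵈ. -/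

import Mathlib

open MeasureTheory Metric
open scoped RealInnerProductSpace

/-!
If `W` were positive somewhere, it would attain a positive global maximum at an interior point `m`.
There the gradient vanishes, the Hessian is negative semidefinite and no jump increases `W`, so
every part of the integro-differential operator is nonpositive at `m`, whereas the subsolution
inequality forces it to be at least `q * W m > 0`.
-/

theorem deriv_deriv_nonpos_of_isLocalMax {g : ℝ → ℝ} {a : ℝ} (hmax : IsLocalMax g a)
    (hg : ContinuousAt g a) : deriv (deriv g) a ≤ 0 := by
  by_contra! hpos
  have hmin : IsLocalMin g a := isLocalMin_of_deriv_deriv_pos hpos hmax.deriv_eq_zero hg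
  have hconst : g =ᶠ[nhds a] fun _ => g a := by
    filter_upwards [hmax, hmin] with t hle hge using le_antisymm hle hge
  have hzero : deriv (deriv g) a = 0 := by simp [hconst.deriv.deriv_eq]
  exact hpos.ne' hzero

section SecondDerivative

variable {𝕜 E F : Type*} [NontriviallyNormedField 𝕜] [NormedAddCommGroup E] [NormedSpace 𝕜 E]
  [NormedAddCommGroup F] [NormedSpace 𝕜 F] {f : E → F} {x : E}

theorem differentiableAt_fderiv_of_contDiffAt_two (hf : ContDiffAt 𝕜 2 f x) :
    DifferentiableAt 𝕜 (fderiv 𝕜 f) x :=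
  (hf.fderiv_right (m := 1) (by norm_num)).differentiableAt one_ne_zero

theorem fderiv_fderiv_apply_const (hf : ContDiffAt 𝕜 2 f x) (v w : E) :
    fderiv 𝕜 (fun y => fderiv 𝕜 f y v) x w = fderiv 𝕜 (fderiv 𝕜 f) x w v := by
  simp [fderiv_clm_apply (differentiableAt_fderiv_of_contDiffAt_two hf)
    (differentiableAt_const v)]

theorem deriv_deriv_comp_add_smul (hf : ContDiffAt 𝕜 2 f x) (v : E) :
    deriv (deriv fun t : 𝕜 => f (x + t • v)) 0 = fderiv 𝕜 (fderiv 𝕜 f) x v v := by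
  have hline (t : 𝕜) : HasDerivAt (fun t : 𝕜 => x + t • v) v t := by
    simpa using ((hasDerivAt_id t).smul_const v).const_add x
  have htendsto : Filter.Tendsto (fun t : 𝕜 => x + t • v) (nhds 0) (nhds x) := by
    simpa using (hline 0).continuousAt.tendsto
  have hfirst : (deriv fun t : 𝕜 => f (x + t • v)) =ᶠ[nhds 0] fun t =>
      fderiv 𝕜 f (x + t • v) v := by
    filter_upwards [htendsto.eventually (hf.eventually (by simp))] with t ht
    exact ((ht.differentiableAt two_ne_zero).hasFDerivAt.comp_hasDerivAt t (hline t)).deriv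
  have hsecond : HasDerivAt (fun t : 𝕜 => fderiv 𝕜 f (x + t • v))
      (fderiv 𝕜 (fderiv 𝕜 f) x v) 0 :=
    (differentiableAt_fderiv_of_contDiffAt_two hf).hasFDerivAt.comp_hasDerivAt_of_eq
      (0 : 𝕜) (hline 0) (by simp)
  rw [hfirst.deriv_eq]
  simpa using (hsecond.clm_apply (hasDerivAt_const (0 : 𝕜) v)).deriv

end SecondDerivative

theorem fderiv_fderiv_apply_self_nonpos_of_isLocalMax {E : Type*} [NormedAddCommGroup E]
    [NormedSpace ℝ E] {f : E → ℝ} {x : E} (hmax : IsLocalMax f x) (hf : ContDiffAt ℝ 2 f x)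
    (v : E) : fderiv ℝ (fderiv ℝ f) x v v ≤ 0 := by
  have hline : ContinuousAt (fun t : ℝ => x + t • v) 0 := by fun_prop
  have hmax' : IsLocalMax f (x + (0 : ℝ) • v) := by simpa using hmax
  have hf' : ContinuousAt f (x + (0 : ℝ) • v) := by simpa using hf.continuousAt
  rw [← deriv_deriv_comp_add_smul hf v]
  exact deriv_deriv_nonpos_of_isLocalMax (hmax'.comp_continuous (g := fun t : ℝ => x + t • v) hline)
    (hf'.comp (f := fun t : ℝ => x + t • v) hline)

theorem sum_sum_posSemidef_mul_apply_nonpos {ι E : Type*} [Fintype ι] [AddCommGroup E]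
    [Module ℝ E] {σ : Matrix ι ι ℝ} (hσ : σ.PosSemidef) {B : E →ₗ[ℝ] E →ₗ[ℝ] ℝ}
    (hB : ∀ v, B v v ≤ 0) (e : ι → E) : ∑ i, ∑ j, σ i j * B (e i) (e j) ≤ 0 := by
  classical
  obtain ⟨A, rfl⟩ : ∃ A : Matrix ι ι ℝ, σ = A.conjTranspose * A := by
    open scoped MatrixOrder in
    exact CStarAlgebra.nonneg_iff_eq_star_mul_self.mp hσ.nonneg
  calc
    ∑ i, ∑ j, (A.conjTranspose * A) i j * B (e i) (e j)
      = ∑ i, ∑ j, ∑ k, A k j * (A k i * B (e i) (e j)) := by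
        simp only [Matrix.mul_apply, Matrix.conjTranspose_apply, star_trivial, Finset.sum_mul,
          mul_assoc, mul_left_comm]
    _ = ∑ k, ∑ j, ∑ i, A k j * (A k i * B (e i) (e j)) := by
        rw [Finset.sum_comm_cycle]
        exact Finset.sum_congr rfl fun k _ => Finset.sum_comm
    _ = ∑ k, B (∑ i, A k i • e i) (∑ j, A k j • e j) := by
        simp only [map_sum, map_smul, LinearMap.sum_apply, LinearMap.smul_apply, smul_eq_mul,
          Finset.mul_sum]
    _ ≤ 0 := Finset.sum_nonpos fun k _ => hB _

theorem exists_forall_le_of_compl_le {X α : Type*} [TopologicalSpace X] [LinearOrder α]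
    {K : Set X} {f : X → α} {c : α} (hK : IsCompact K) (hf : UpperSemicontinuousOn f K)
    (hout : ∀ x ∉ K, f x ≤ c) {x₀ : X} (hx₀ : c < f x₀) : ∃ m, ∀ x, f x ≤ f m := by
  have hx₀K : x₀ ∈ K := not_imp_comm.mp (hout x₀) hx₀.not_ge
  obtain ⟨m, -, hm⟩ := hf.exists_isMaxOn ⟨x₀, hx₀K⟩ hK
  refine ⟨m, fun x => ?_⟩
  by_cases hx : x ∈ K
  · exact hm hx
  · exact (hout x hx).trans (hx₀.le.trans (hm hx₀K))

theorem support_subset_ball_of_subset_closedBall {E M : Type*} [NormedAddCommGroup E]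
    [NormedSpace ℝ E] [TopologicalSpace M] [T1Space M] [Zero M] {f : E → M} {c : E} {r : ℝ}
    (hf : Continuous f) (hr : r ≠ 0) (hsupp : Function.support f ⊆ closedBall c r) :
    Function.support f ⊆ ball c r := by
  rw [← interior_closedBall c hr]
  exact interior_maximal hsupp (isOpen_compl_singleton.preimage hf)

theorem integrable_compensated_increment {E : Type*} [NormedAddCommGroup E]
    [InnerProductSpace ℝ E] [SecondCountableTopology E] [MeasurableSpace E] [BorelSpace E]
    {ν : Measure E} [IsFiniteMeasure ν] (hν : Integrable (fun z => ‖z‖) ν) {W : E → ℝ}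
    (hW : Continuous W) (hWsupp : HasCompactSupport W) (x p : E) :
    Integrable (fun z => W (x + z) - W x - ⟪p, z⟫) ν := by
  have hshift : Integrable (fun z => W (x + z)) ν :=
    (hW.comp (continuous_const_add x)).integrable_of_hasCompactSupport
      (hWsupp.comp_homeomorph (Homeomorph.addLeft x))
  have hid : Integrable (fun z : E => z) ν :=
    (integrable_norm_iff aestronglyMeasurable_id).mp hν
  exact (hshift.sub (integrable_const (W x))).sub (hid.const_inner p)

section Operator

variable {ι : Type*} [Fintype ι] [DecidableEq ι]

/-- The generator of a Lévy process with diffusion matrix `σ`, drift `γ` and jump measure `ν`,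
applied to `W` at `x`. The jumps are compensated without truncation. -/
noncomputable def integroDiffOperator (σ : Matrix ι ι ℝ) (γ : EuclideanSpace ℝ ι)
    (ν : Measure (EuclideanSpace ℝ ι)) (W : EuclideanSpace ℝ ι → ℝ) (x : EuclideanSpace ℝ ι) :
    ℝ :=
  (1 / 2) * ∑ i, ∑ j, σ i j *
      fderiv ℝ (fun y => fderiv ℝ W y (EuclideanSpace.single j 1)) x (EuclideanSpace.single i 1)
    + ⟪gradient W x, γ⟫
    + ∫ z, (W (x + z) - W x - ⟪gradient W x, z⟫) ∂ν

/-- `W` is a classical subsolution at `x` of the equation `q W - L W = 0`, where `L` is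
`integroDiffOperator σ γ ν`. Smoothness and integrability are part of the notion because the
derivatives and the integral in `L` would otherwise take the default value `0`. -/
structure IsIntegroDiffSubsolutionAt (q : ℝ) (σ : Matrix ι ι ℝ) (γ : EuclideanSpace ℝ ι)
    (ν : Measure (EuclideanSpace ℝ ι)) (W : EuclideanSpace ℝ ι → ℝ) (x : EuclideanSpace ℝ ι) :
    Prop where
  contDiffAt : ContDiffAt ℝ 2 W x
  integrable : Integrable (fun z => W (x + z) - W x - ⟪gradient W x, z⟫) ν
  mul_le : q * W x ≤ integroDiffOperator σ γ ν W x

theorem integroDiffOperator_nonpos_of_forall_le {σ : Matrix ι ι ℝ} (hσ : σ.PosSemidef)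
    (γ : EuclideanSpace ℝ ι) (ν : Measure (EuclideanSpace ℝ ι)) {W : EuclideanSpace ℝ ι → ℝ}
    {x : EuclideanSpace ℝ ι} (hW : ContDiffAt ℝ 2 W x) (hmax : ∀ y, W y ≤ W x) :
    integroDiffOperator σ γ ν W x ≤ 0 := by
  have hloc : IsLocalMax W x := Filter.Eventually.of_forall hmax
  have hgrad : gradient W x = 0 := by simp [gradient, hloc.fderiv_eq_zero]
  have hdiffusion : ∑ i, ∑ j, σ i j * fderiv ℝ (fderiv ℝ W) x
      (EuclideanSpace.single i 1) (EuclideanSpace.single j 1) ≤ 0 :=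
    sum_sum_posSemidef_mul_apply_nonpos hσ
      (B := (ContinuousLinearMap.coeLM ℝ).comp (fderiv ℝ (fderiv ℝ W) x).toLinearMap)
      (fderiv_fderiv_apply_self_nonpos_of_isLocalMax hloc hW) _
  have hjump : ∫ z, (W (x + z) - W x) ∂ν ≤ 0 :=
    integral_nonpos fun z => sub_nonpos.mpr (hmax (x + z))
  simp only [integroDiffOperator, fderiv_fderiv_apply_const hW, hgrad, inner_zero_left, sub_zero]
  linarith

theorem comparison_principle_integro_differential_general {Ω : Set (EuclideanSpace ℝ ι)}
    (hΩ : Bornology.IsBounded Ω) {q : EuclideanSpace ℝ ι → ℝ}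
    {σ : EuclideanSpace ℝ ι → Matrix ι ι ℝ} {γ : EuclideanSpace ℝ ι → EuclideanSpace ℝ ι}
    {ν : EuclideanSpace ℝ ι → Measure (EuclideanSpace ℝ ι)} {W : EuclideanSpace ℝ ι → ℝ}
    (hq : ∀ x ∈ Ω, 0 < q x) (hσ : ∀ x ∈ Ω, (σ x).PosSemidef)
    (hW : UpperSemicontinuousOn W (closure Ω))
    (hsub : ∀ x ∈ Ω, IsIntegroDiffSubsolutionAt (q x) (σ x) (γ x) (ν x) W x)
    (hout : ∀ x ∉ Ω, W x ≤ 0) (x : EuclideanSpace ℝ ι) : W x ≤ 0 := by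
  by_contra! hx
  obtain ⟨m, hmax⟩ := exists_forall_le_of_compl_le hΩ.isCompact_closure hW
    (fun y hy => hout y fun hyΩ => hy (subset_closure hyΩ)) hx
  have hpos : 0 < W m := hx.trans_le (hmax x)
  have hm : m ∈ Ω := not_imp_comm.mp (hout m) hpos.not_ge
  have hnonpos : integroDiffOperator (σ m) (γ m) (ν m) W m ≤ 0 :=
    integroDiffOperator_nonpos_of_forall_le (hσ m hm) _ _ (hsub m hm).contDiffAt hmax
  exact (mul_pos (hq m hm) hpos).not_ge ((hsub m hm).mul_le.trans hnonpos)

end Operator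

/-- Comparison principle for the elliptic integro-differential operator: a subsolution
that is nonpositive on the annulus `R ≤ |x| < R + b/2` is nonpositive everywhere. -/
theorem comparison_principle_integro_differential
    (d : ℕ) (hd : 1 ≤ d) (R b q : ℝ) (hR : 0 < R) (hb : 0 < b) (hq : 0 < q)
    (γ : EuclideanSpace ℝ (Fin d)) (σ : Matrix (Fin d) (Fin d) ℝ) (hσ : σ.PosSemidef)
    (ν : Measure (EuclideanSpace ℝ (Fin d))) [IsFiniteMeasure ν]
    (hν0 : ν {0} = 0) (hν1 : Integrable (fun z => ‖z‖) ν)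
    (W : EuclideanSpace ℝ (Fin d) → ℝ) (hWc : Continuous W)
    (hWsupp : Function.support W ⊆ closedBall 0 (R + b / 2))
    (hWd : ContDiffOn ℝ 2 W (ball 0 R))
    (hsub : ∀ x ∈ ball (0 : EuclideanSpace ℝ (Fin d)) R,
      q * W x
        - (1 / 2) * ∑ i, ∑ j, σ i j *
            fderiv ℝ (fun y => fderiv ℝ W y (EuclideanSpace.single j 1)) x
              (EuclideanSpace.single i 1)
        - ⟪gradient W x, γ⟫
        - ∫ z, (W (x + z) - W x - ⟪gradient W x, z⟫) ∂ν ≤ 0)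
    (hbdry : ∀ x : EuclideanSpace ℝ (Fin d), R ≤ ‖x‖ → ‖x‖ < R + b / 2 → W x ≤ 0) :
    ∀ x : EuclideanSpace ℝ (Fin d), W x ≤ 0 := by
  have hsuppball : Function.support W ⊆ ball 0 (R + b / 2) :=
    support_subset_ball_of_subset_closedBall hWc (by positivity) hWsupp
  have hWcompact : HasCompactSupport W :=
    HasCompactSupport.of_support_subset_isCompact (isCompact_closedBall 0 _) hWsupp
  refine comparison_principle_integro_differential_general (q := fun _ => q) (σ := fun _ => σ)
    (γ := fun _ => γ) (ν := fun _ => ν) (isBounded_ball (x := 0) (r := R)) (fun _ _ => hq)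
    (fun _ _ => hσ) (hWc.upperSemicontinuous.upperSemicontinuousOn _)
    (fun x hx => ?_) fun x hx => ?_
  · exact ⟨hWd.contDiffAt (isOpen_ball.mem_nhds hx),
      integrable_compensated_increment hν1 hWc hWcompact x _,
      by unfold integroDiffOperator; linarith [hsub x hx]⟩
  · by_contra! hpos
    have hxball : ‖x‖ < R + b / 2 := mem_ball_zero_iff.mp (hsuppball hpos.ne')
    exact hpos.not_ge (hbdry x (by simpa using hx) hxball)
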